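/- Let h: ℝ³×ℝ³ → ℝ be C², let t ↦ (y(t), ξ(t)) be a C¹ curve defined on an interval I containing 0, and let P, R: I → M₃(ℂ) be differentiable solutions of P′ = (∇_{ξy}h) P + (∇_{ξξ}h) R and R′ = −(∇_{yy}h) P − (∇_{yξ}h) R along the curve, with initial data P(0) = I₃ and R(0) = M₀, where M₀ ∈ M₃(ℂ) is symmetric (M₀ᵀ = M₀) and has positive definite imaginary part. Then for every t ∈ I the matrix P(t) is invertible, and M(t) = R(t)P(t)⁻¹ is symmetric with positive definite imaginary part. In particular, with M₀ = ∇²S_I(y₀) + iI₃ for a real C² initial phase S_I, the Gaussian beam Hessian M(t) has positive definite imaginary part for all time. -/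

import Mathlib

open Matrix Complex BigOperators

noncomputable section

attribute [local instance] Matrix.normedAddCommGroup Matrix.normedSpace

/-- Points of `ℝ³` as functions `Fin 3 → ℝ`. -/
abbrev V3 := Fin 3 → ℝ

/-- The coordinate direction `i` in the `y`-slot of `ℝ³ × ℝ³`. -/
def ey (i : Fin 3) : V3 × V3 := (Pi.single i 1, 0)

/-- The coordinate direction `i` in the `ξ`-slot of `ℝ³ × ℝ³`. -/
def eXi (i : Fin 3) : V3 × V3 := (0, Pi.single i 1)

/-- `(∇_{yy}h)_{ij} = ∂²h/∂y_i∂y_j`. -/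
def Hyy (h : V3 × V3 → ℝ) (p : V3 × V3) : Matrix (Fin 3) (Fin 3) ℝ :=
  Matrix.of fun i j => fderiv ℝ (fun q => fderiv ℝ h q (ey j)) p (ey i)

/-- `(∇_{yξ}h)_{ij} = ∂²h/∂y_i∂ξ_j`. -/
def Hyxi (h : V3 × V3 → ℝ) (p : V3 × V3) : Matrix (Fin 3) (Fin 3) ℝ :=
  Matrix.of fun i j => fderiv ℝ (fun q => fderiv ℝ h q (eXi j)) p (ey i)

/-- `(∇_{ξy}h)_{ij} = ∂²h/∂ξ_i∂y_j`, so that `∇_{ξy}h = (∇_{yξ}h)ᵀ` for `C²` functions. -/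
def Hxiy (h : V3 × V3 → ℝ) (p : V3 × V3) : Matrix (Fin 3) (Fin 3) ℝ :=
  Matrix.of fun i j => fderiv ℝ (fun q => fderiv ℝ h q (ey j)) p (eXi i)

/-- `(∇_{ξξ}h)_{ij} = ∂²h/∂ξ_i∂ξ_j`. -/
def Hxixi (h : V3 × V3 → ℝ) (p : V3 × V3) : Matrix (Fin 3) (Fin 3) ℝ :=
  Matrix.of fun i j => fderiv ℝ (fun q => fderiv ℝ h q (eXi j)) p (eXi i)

theorem snd_symm (h : V3 × V3 → ℝ) (hh : ContDiff ℝ 2 h) (p u v : V3 × V3) :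
    fderiv ℝ (fun q => fderiv ℝ h q u) p v = fderiv ℝ (fun q => fderiv ℝ h q v) p u := by
  have hd : DifferentiableAt ℝ (fderiv ℝ h) p :=
    ((hh.fderiv_right (m := 1) (by norm_num)).differentiable (by norm_num)) p
  have key : ∀ w : V3 × V3, ∀ z, fderiv ℝ (fun q => fderiv ℝ h q w) p z
      = fderiv ℝ (fderiv ℝ h) p z w := by
    intro w z
    have := (hd.hasFDerivAt.clm_apply (hasFDerivAt_const w p)).fderiv
    rw [this]; simp
  rw [key, key]
  exact (hh.contDiffAt.isSymmSndFDerivAt (by simp)) v u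

theorem mat_hasDeriv_iff (P : ℝ → Matrix (Fin 3) (Fin 3) ℂ) (P' : Matrix (Fin 3) (Fin 3) ℂ)
    (I : Set ℝ) (t : ℝ) :
    HasDerivWithinAt P P' I t ↔ ∀ i j, HasDerivWithinAt (fun s => P s i j) (P' i j) I t := by
  refine Iff.trans (hasDerivWithinAt_pi (φ := P) (φ' := P')) ?_
  exact forall_congr' fun i => hasDerivWithinAt_pi (φ := fun s => P s i) (φ' := P' i)

theorem mat_mul_deriv {P R : ℝ → Matrix (Fin 3) (Fin 3) ℂ} {P' R' : Matrix (Fin 3) (Fin 3) ℂ}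
    {I : Set ℝ} {t : ℝ} (hP : HasDerivWithinAt P P' I t) (hR : HasDerivWithinAt R R' I t) :
    HasDerivWithinAt (fun s => P s * R s) (P' * R t + P t * R') I t := by
  rw [mat_hasDeriv_iff] at *
  intro i j
  simp only [Matrix.mul_apply, Matrix.add_apply, ← Finset.sum_add_distrib]
  exact HasDerivWithinAt.fun_sum fun k _ => (hP i k).mul (hR k j)

theorem mat_tr_deriv {P : ℝ → Matrix (Fin 3) (Fin 3) ℂ} {P' : Matrix (Fin 3) (Fin 3) ℂ}
    {I : Set ℝ} {t : ℝ} (hP : HasDerivWithinAt P P' I t) :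
    HasDerivWithinAt (fun s => (P s)ᵀ) P'ᵀ I t := by
  rw [mat_hasDeriv_iff] at *
  intro i j
  exact hP j i

theorem mat_conj_deriv {P : ℝ → Matrix (Fin 3) (Fin 3) ℂ} {P' : Matrix (Fin 3) (Fin 3) ℂ}
    {I : Set ℝ} {t : ℝ} (hP : HasDerivWithinAt P P' I t) :
    HasDerivWithinAt (fun s => (P s).map (starRingEnd ℂ)) (P'.map (starRingEnd ℂ)) I t := by
  rw [mat_hasDeriv_iff] at *
  intro i j
  exact (hP i j).star

theorem wronskian_const {I : Set ℝ} (hI : I.OrdConnected) (h0I : (0 : ℝ) ∈ I)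
    {A B C : ℝ → Matrix (Fin 3) (Fin 3) ℂ} (hB : ∀ t, (B t)ᵀ = B t) (hC : ∀ t, (C t)ᵀ = C t)
    {P R Q S : ℝ → Matrix (Fin 3) (Fin 3) ℂ}
    (hP : ∀ t ∈ I, HasDerivWithinAt P (A t * P t + B t * R t) I t)
    (hR : ∀ t ∈ I, HasDerivWithinAt R (-(C t * P t) - (A t)ᵀ * R t) I t)
    (hQ : ∀ t ∈ I, HasDerivWithinAt Q (A t * Q t + B t * S t) I t)
    (hS : ∀ t ∈ I, HasDerivWithinAt S (-(C t * Q t) - (A t)ᵀ * S t) I t) :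
    ∀ t ∈ I, (Q t)ᵀ * R t - (S t)ᵀ * P t = (Q 0)ᵀ * R 0 - (S 0)ᵀ * P 0 := by
  intro t ht
  have hd : ∀ s ∈ I, HasDerivWithinAt (fun s => (Q s)ᵀ * R s - (S s)ᵀ * P s)
      (0 : Matrix (Fin 3) (Fin 3) ℂ) I s := by
    intro s hs
    refine ((mat_mul_deriv (mat_tr_deriv (hQ s hs)) (hR s hs)).sub
      (mat_mul_deriv (mat_tr_deriv (hS s hs)) (hP s hs))).congr_deriv ?_
    simp only [Matrix.transpose_add, Matrix.transpose_sub, Matrix.transpose_neg,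
      Matrix.transpose_mul, Matrix.transpose_transpose, hB, hC]
    noncomm_ring
  have := Convex.norm_image_sub_le_of_norm_hasDerivWithin_le (C := 0) hd
    (fun s _ => by simp) hI.convex h0I ht
  rw [zero_mul] at this
  exact sub_eq_zero.mp (norm_le_zero_iff.mp this)

open scoped ComplexOrder in
theorem posdef_complex {S : Matrix (Fin 3) (Fin 3) ℝ} (hS : S.PosDef) :
    (S.map Complex.ofReal).PosDef := by
  have hs : ∀ i j, S j i = S i j := fun i j => by simpa using hS.1.apply i j
  refine Matrix.PosDef.of_dotProduct_mulVec_pos ?_ ?_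
  · ext i j
    simp [hs i j]
  · intro z hz
    have e : star z ⬝ᵥ (S.map Complex.ofReal *ᵥ z)
        = (((fun i => (z i).re) ⬝ᵥ (S *ᵥ (fun i => (z i).re))
          + (fun i => (z i).im) ⬝ᵥ (S *ᵥ (fun i => (z i).im)) : ℝ) : ℂ) := by
      apply Complex.ext <;>
      simp [dotProduct, Matrix.mulVec, Fin.sum_univ_three] <;>
      rw [hs 0 1, hs 0 2, hs 1 2] <;> ring
    rw [e]
    rw [Complex.zero_lt_real]
    have n1 := hS.posSemidef.dotProduct_mulVec_nonneg (fun i => (z i).re)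
    have n2 := hS.posSemidef.dotProduct_mulVec_nonneg (fun i => (z i).im)
    rw [star_trivial] at n1 n2
    by_cases hr : (fun i => (z i).re) = 0
    · have hi : (fun i => (z i).im) ≠ 0 := by
        intro hi
        apply hz
        ext i
        exact Complex.ext (congrFun hr i) (congrFun hi i)
      have := hS.dotProduct_mulVec_pos hi
      rw [star_trivial] at this
      linarith
    · have := hS.dotProduct_mulVec_pos hr
      rw [star_trivial] at this
      linarith

open scoped ComplexOrder in
theorem posdef_real {S : Matrix (Fin 3) (Fin 3) ℝ} (hS : (S.map Complex.ofReal).PosDef) :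
    S.PosDef := by
  refine Matrix.PosDef.of_dotProduct_mulVec_pos ?_ ?_
  · ext i j
    have := hS.1.apply i j
    simp at this
    simpa using this
  · intro x hx
    have hz : (fun i => (x i : ℂ)) ≠ 0 := by
      intro h
      apply hx
      ext i
      simpa using congrFun h i
    have := hS.dotProduct_mulVec_pos hz
    rw [← Complex.zero_lt_real]
    convert this using 1
    simp [dotProduct, Matrix.mulVec]

open scoped ComplexOrder in
theorem final_algebra {P R M₀ : Matrix (Fin 3) (Fin 3) ℂ} (hM₀sym : M₀ᵀ = M₀)
    (hM₀im : (Matrix.of fun i j => (M₀ i j).im).PosDef)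
    (h1 : Pᵀ * R - Rᵀ * P = 0) (h2 : Pᴴ * R - Rᴴ * P = M₀ - M₀ᴴ) :
    IsUnit P ∧ (R * P⁻¹)ᵀ = R * P⁻¹ ∧
      (Matrix.of fun i j => ((R * P⁻¹) i j).im).PosDef := by
  have him : ∀ M : Matrix (Fin 3) (Fin 3) ℂ, Mᵀ = M →
      M - Mᴴ = (2 * Complex.I) • (Matrix.of fun i j => (M i j).im).map Complex.ofReal := by
    intro M hM
    ext i j
    have : M j i = M i j := congrFun (congrFun hM i) j
    simp [this]
    apply Complex.ext <;> simp
    ring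
  have h2I : (2 * Complex.I) ≠ 0 := by simp
  rw [him _ hM₀sym] at h2
  have hc := posdef_complex hM₀im
  generalize (Matrix.of fun i j => (M₀ i j).im).map Complex.ofReal = K at h2 hc
  have hU : IsUnit P := by
    rw [← Matrix.mulVec_injective_iff_isUnit]
    rw [← Matrix.coe_mulVecLin, ← LinearMap.ker_eq_bot, LinearMap.ker_eq_bot']
    intro v hv
    rw [Matrix.mulVecLin_apply] at hv
    by_contra hne
    have hpos := hc.dotProduct_mulVec_pos hne
    have e : star v ⬝ᵥ ((Pᴴ * R - Rᴴ * P) *ᵥ v) = 0 := by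
      rw [Matrix.sub_mulVec, ← Matrix.mulVec_mulVec, ← Matrix.mulVec_mulVec, hv,
        dotProduct_sub, Matrix.dotProduct_mulVec, ← Matrix.star_mulVec, hv]
      simp
    rw [h2, Matrix.smul_mulVec, dotProduct_smul, smul_eq_mul] at e
    exact hpos.ne' ((mul_eq_zero.mp e).resolve_left h2I)
  have hdet : IsUnit P.det := (Matrix.isUnit_iff_isUnit_det P).mp hU
  have hPi : P * P⁻¹ = 1 := Matrix.mul_nonsing_inv P hdet
  have hsym : (R * P⁻¹)ᵀ = R * P⁻¹ := by
    have hPt : (P⁻¹)ᵀ * Pᵀ = 1 := by rw [← Matrix.transpose_mul, hPi, Matrix.transpose_one]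
    calc (R * P⁻¹)ᵀ = (P⁻¹)ᵀ * (Rᵀ * P) * P⁻¹ := by
          rw [Matrix.transpose_mul]; simp only [Matrix.mul_assoc, hPi, Matrix.mul_one]
      _ = (P⁻¹)ᵀ * (Pᵀ * R) * P⁻¹ := by rw [sub_eq_zero.mp h1]
      _ = R * P⁻¹ := by rw [← Matrix.mul_assoc, hPt, Matrix.one_mul]
  refine ⟨hU, hsym, posdef_real ?_⟩
  have hPh : (P⁻¹)ᴴ * Pᴴ = 1 := by
    rw [← Matrix.conjTranspose_mul, hPi, Matrix.conjTranspose_one]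
  have e : R * P⁻¹ - (R * P⁻¹)ᴴ = (2 * Complex.I) • ((P⁻¹)ᴴ * K * P⁻¹) := by
    have : (2 * Complex.I) • ((P⁻¹)ᴴ * K * P⁻¹) = (P⁻¹)ᴴ * (Pᴴ * R - Rᴴ * P) * P⁻¹ := by
      rw [h2]; simp
    rw [this, Matrix.mul_sub, Matrix.sub_mul, ← Matrix.mul_assoc, hPh, Matrix.one_mul,
      Matrix.conjTranspose_mul]
    simp only [Matrix.mul_assoc, hPi, Matrix.mul_one]
  rw [him _ hsym] at e
  rw [smul_right_injective _ h2I e]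
  refine hc.conjTranspose_mul_mul_same ?_
  rw [Matrix.mulVec_injective_iff_isUnit]
  exact Matrix.isUnit_nonsing_inv_iff.mpr hU

/-- for solutions `P, R` of the linear system along a `C¹` curve on an interval
`I ∋ 0`, with `P(0) = I₃`, `R(0) = M₀`, `M₀` symmetric with positive definite imaginary part,
the matrix `P(t)` is invertible for all `t ∈ I` and `M(t) = R(t)P(t)⁻¹` is symmetric with
positive definite imaginary part.  (In particular this applies to the Gaussian beam initial
data `M₀ = ∇²S_I(y₀) + iI₃` for a real `C²` initial phase `S_I`.) -/
theorem gaussian_beam_hessian_posdef (h : V3 × V3 → ℝ) (hh : ContDiff ℝ 2 h)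
    (I : Set ℝ) (hI : I.OrdConnected) (h0I : (0 : ℝ) ∈ I)
    (y ξ : ℝ → V3) (hcurve : ContDiffOn ℝ 1 (fun t => (y t, ξ t)) I)
    (P R : ℝ → Matrix (Fin 3) (Fin 3) ℂ)
    (hP : ∀ t ∈ I, HasDerivWithinAt P
      ((Hxiy h (y t, ξ t)).map Complex.ofReal * P t
        + (Hxixi h (y t, ξ t)).map Complex.ofReal * R t) I t)
    (hR : ∀ t ∈ I, HasDerivWithinAt R
      (-((Hyy h (y t, ξ t)).map Complex.ofReal * P t)
        - (Hyxi h (y t, ξ t)).map Complex.ofReal * R t) I t)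
    (M₀ : Matrix (Fin 3) (Fin 3) ℂ) (hP0 : P 0 = 1) (hR0 : R 0 = M₀)
    (hM₀sym : M₀ᵀ = M₀)
    (hM₀im : (Matrix.of fun i j => (M₀ i j).im).PosDef) :
    ∀ t ∈ I, IsUnit (P t) ∧
      (R t * (P t)⁻¹)ᵀ = R t * (P t)⁻¹ ∧
      (Matrix.of fun i j => ((R t * (P t)⁻¹) i j).im).PosDef := by
  intro t ht
  have hsB : ∀ t, ((Hxixi h (y t, ξ t)).map Complex.ofReal)ᵀ
      = (Hxixi h (y t, ξ t)).map Complex.ofReal := by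
    intro t; ext i j
    simp only [Matrix.transpose_apply, Matrix.map_apply, Hxixi, Matrix.of_apply]
    rw [snd_symm h hh]
  have hsC : ∀ t, ((Hyy h (y t, ξ t)).map Complex.ofReal)ᵀ
      = (Hyy h (y t, ξ t)).map Complex.ofReal := by
    intro t; ext i j
    simp only [Matrix.transpose_apply, Matrix.map_apply, Hyy, Matrix.of_apply]
    rw [snd_symm h hh]
  have hsA : ∀ t, (Hyxi h (y t, ξ t)).map Complex.ofReal
      = ((Hxiy h (y t, ξ t)).map Complex.ofReal)ᵀ := by
    intro t; ext i j
    simp only [Matrix.transpose_apply, Matrix.map_apply, Hxiy, Hyxi, Matrix.of_apply]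
    rw [snd_symm h hh]
  simp only [hsA] at hR
  have hreal : ∀ N : Matrix (Fin 3) (Fin 3) ℝ,
      (N.map Complex.ofReal).map (starRingEnd ℂ) = N.map Complex.ofReal := by
    intro N; ext i j; simp
  have hPc : ∀ t ∈ I, HasDerivWithinAt (fun s => (P s).map (starRingEnd ℂ))
      ((Hxiy h (y t, ξ t)).map Complex.ofReal * (P t).map (starRingEnd ℂ)
        + (Hxixi h (y t, ξ t)).map Complex.ofReal * (R t).map (starRingEnd ℂ)) I t := by
    intro t ht
    refine (mat_conj_deriv (hP t ht)).congr_deriv ?_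
    rw [Matrix.map_add _ (map_add _), Matrix.map_mul, Matrix.map_mul, hreal, hreal]
  have hRc : ∀ t ∈ I, HasDerivWithinAt (fun s => (R s).map (starRingEnd ℂ))
      (-((Hyy h (y t, ξ t)).map Complex.ofReal * (P t).map (starRingEnd ℂ))
        - ((Hxiy h (y t, ξ t)).map Complex.ofReal)ᵀ * (R t).map (starRingEnd ℂ)) I t := by
    intro t ht
    refine (mat_conj_deriv (hR t ht)).congr_deriv ?_
    rw [Matrix.map_sub _ (map_sub _), Matrix.map_neg _ (map_neg _), Matrix.map_mul,
      Matrix.map_mul, ← Matrix.transpose_map, hreal, hreal]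
  have w1 := wronskian_const hI h0I hsB hsC hP hR hP hR t ht
  have w2 := wronskian_const hI h0I hsB hsC hP hR hPc hRc t ht
  have hct : ∀ N : Matrix (Fin 3) (Fin 3) ℂ, (N.map (starRingEnd ℂ))ᵀ = Nᴴ := by
    intro N; ext i j; simp
  simp only [hct] at w2
  rw [hP0, hR0] at w1 w2
  refine final_algebra hM₀sym hM₀im ?_ ?_
  · rw [w1, hM₀sym]; simp
  · rw [w2]; simp
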